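/- Let s be a positive integer, let A ∈ ℝ^{s×s} and B ∈ ℝ^{s} be fixed matrices, let f : ℝ → ℝ be a function, and let c : ℝ → ℝ^s satisfy, for every t > 0, the derivative identity c'(t) = −(1/t)·A·c(t) + (1/t)·B·f(t). Then for every β > 0, the dilated functions c̃(t) := c(βt) and f̃(t) := f(βt) satisfy, for every t > 0, c̃'(t) = −(1/t)·A·c̃(t) + (1/t)·B·f̃(t). In other words, the HiPPO-LegS projection dynamics are equivariant under time dilation: dilating the input signal dilates the coefficient trajectory by the same factor without changing the dynamics. -/

import Mathlib

open Matrix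

/-- Timescale equivariance of HiPPO-LegS dynamics: if
`c'(t) = −(1/t) A c(t) + (1/t) B f(t)` for all `t > 0`, then for every dilation
factor `β > 0` the dilated trajectory `c̃(t) = c(βt)` satisfies the same dynamics
driven by the dilated input `f̃(t) = f(βt)`. -/
theorem stmt_4 (s : ℕ) (hs : 0 < s)
    (A : Matrix (Fin s) (Fin s) ℝ) (B : Fin s → ℝ)
    (f : ℝ → ℝ) (c : ℝ → (Fin s → ℝ))
    (hc : ∀ t : ℝ, 0 < t →
      HasDerivAt c (-((1 / t) • A.mulVec (c t)) + ((1 / t) * f t) • B) t) :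
    ∀ β : ℝ, 0 < β → ∀ t : ℝ, 0 < t →
      HasDerivAt (fun r : ℝ => c (β * r))
        (-((1 / t) • A.mulVec (c (β * t))) + ((1 / t) * f (β * t)) • B) t := by
  intro β hβ t ht
  have h1 : HasDerivAt (fun r : ℝ => β * r) β t := by
    simpa using (hasDerivAt_id t).const_mul β
  have h2 := HasDerivAt.scomp t (hc (β * t) (mul_pos hβ ht)) h1
  have e : β * (1 / (β * t)) = 1 / t := by
    field_simp
  rw [smul_add, smul_neg, smul_smul, smul_smul, ← mul_assoc, e] at h2
  exact h2
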